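/- Let w ∈ ℂ satisfy a + 3w ≠ 0 and (a²−3b)w² + (ab−9c)w + (b²−3ac) ≠ 0. Then the set {z ∈ ℂ : 3z² + 2az + b ≠ 0 and Q(z) = w} has exactly two elements. Moreover, if α₁, α₂, α₃ are not vertices of an equilateral triangle, then Q(u*) = v* and Q(v*) = u*. -/

import Mathlib

/-!
Write `p z = z³ + a z² + b z + c`. Then `Q z = z - 3 p z / p' z`, so `Q z = w` means that the polar
`3 p z + (w - z) p' z` vanishes; `p` having simple roots, it cannot vanish together with `p' z`.
For fixed `w` the polar is a quadratic in `z`, whose discriminant is four times the Hessian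
expression in `w`. This gives two solutions as soon as the quadratic does not degenerate.

The points `u` and `v` are the roots of the Hessian, and `p` is a multiple of `L³ - M³` for linear
polynomials `L` and `M` with roots `u` and `v`. The polar is then a multiple of
`L(z)² L(w) - M(z)² M(w)`, which vanishes at `(u, v)` and at `(v, u)`.
-/

section CommRing

variable {R : Type*} [CommRing R]

/-- The polar of the cubic form `z³ + a z² y + b z y² + c y³` at `(z, 1)` in the direction `(w, 1)`:
the sum of its two partial derivatives at `(z, 1)` weighted by `w` and `1`. -/
def cubicPolar (a b c z w : R) : R :=
  (a * z ^ 2 + 2 * b * z + 3 * c) + w * (3 * z ^ 2 + 2 * a * z + b)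

/-- One of the two linear factors of the Hessian of `(z - α₁) (z - α₂) (z - α₃)`, where `e₁, e₂, e₃`
are the cube roots of a common number; exchanging `e₁` and `e₂` gives the other factor. -/
def hessianFactor (e₁ e₂ e₃ α₁ α₂ α₃ z : R) : R :=
  (α₁ * e₁ + α₂ * e₂ + α₃ * e₃) * z + (α₁ * α₂ * e₃ + α₁ * α₃ * e₂ + α₂ * α₃ * e₁)

lemma cubicPolar_eq_three_mul_add (a b c z w : R) :
    cubicPolar a b c z w =
      3 * (z ^ 3 + a * z ^ 2 + b * z + c) + (w - z) * (3 * z ^ 2 + 2 * a * z + b) := by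
  rw [cubicPolar]
  ring

lemma cubicPolar_eq_quadratic (a b c z w : R) :
    cubicPolar a b c z w =
      (a + 3 * w) * (z * z) + 2 * (b + a * w) * z + (3 * c + b * w) := by
  rw [cubicPolar]
  ring

lemma discrim_cubicPolar (a b c w : R) :
    discrim (a + 3 * w) (2 * (b + a * w)) (3 * c + b * w) =
      2 * 2 * ((a ^ 2 - 3 * b) * w ^ 2 + (a * b - 9 * c) * w + (b ^ 2 - 3 * a * c)) := by
  rw [discrim]
  ring

/- For `w = z` and `L`, `M` the two factors, this is `L³ - M³ = (L - M) (L - ω M) (L - ω² M)`: since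
`L - M = (e₁ - e₂) (α₁ - α₂) (z - α₃)`, and likewise for `ω M` and `ω² M` with the indices permuted,
the product is a multiple of the cubic. The general case is its polarization. -/
lemma hessianFactor_sq_mul_sub_eq_mul_cubicPolar {e₁ e₂ e₃ : R} (h_sum : e₁ + e₂ + e₃ = 0)
    (h_pairs : e₁ * e₂ + e₁ * e₃ + e₂ * e₃ = 0) (α₁ α₂ α₃ z w : R) :
    hessianFactor e₁ e₂ e₃ α₁ α₂ α₃ z ^ 2 * hessianFactor e₁ e₂ e₃ α₁ α₂ α₃ w
        - hessianFactor e₂ e₁ e₃ α₁ α₂ α₃ z ^ 2 * hessianFactor e₂ e₁ e₃ α₁ α₂ α₃ w =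
      (e₁ - e₂) * e₃ ^ 2 * ((α₁ - α₂) * (α₁ - α₃) * (α₂ - α₃)) *
        cubicPolar (-(α₁ + α₂ + α₃)) (α₁ * α₂ + α₁ * α₃ + α₂ * α₃) (-(α₁ * α₂ * α₃)) z w := by
  obtain rfl : e₃ = -(e₁ + e₂) := by linear_combination h_sum
  simp only [hessianFactor, cubicPolar]
  grind

end CommRing

section IsDomain

variable {R : Type*} [CommRing R] [IsDomain R] {α₁ α₂ α₃ : R}

lemma cubic_derivative_ne_zero_of_root (h₁₂ : α₁ ≠ α₂) (h₁₃ : α₁ ≠ α₃) (h₂₃ : α₂ ≠ α₃) {z : R}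
    (hz : (z - α₁) * (z - α₂) * (z - α₃) = 0) :
    (z - α₂) * (z - α₃) + (z - α₁) * (z - α₃) + (z - α₁) * (z - α₂) ≠ 0 := by
  simp only [mul_eq_zero, sub_eq_zero] at hz
  rcases hz with (rfl | rfl) | rfl
  · simp [sub_eq_zero, h₁₂, h₁₃]
  · simp [sub_eq_zero, h₁₂.symm, h₂₃]
  · simp [sub_eq_zero, h₁₃.symm, h₂₃.symm]

lemma cubic_derivative_ne_zero_of_cubicPolar_eq_zero [NeZero (3 : R)] (h₁₂ : α₁ ≠ α₂)
    (h₁₃ : α₁ ≠ α₃) (h₂₃ : α₂ ≠ α₃) {z w : R}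
    (h : cubicPolar (-(α₁ + α₂ + α₃)) (α₁ * α₂ + α₁ * α₃ + α₂ * α₃) (-(α₁ * α₂ * α₃)) z w = 0) :
    3 * z ^ 2 + 2 * -(α₁ + α₂ + α₃) * z + (α₁ * α₂ + α₁ * α₃ + α₂ * α₃) ≠ 0 := by
  intro h_deriv
  rw [cubicPolar_eq_three_mul_add, h_deriv, mul_zero, add_zero] at h
  have h_root := (mul_eq_zero.1 h).resolve_left (NeZero.ne 3)
  refine cubic_derivative_ne_zero_of_root h₁₂ h₁₃ h₂₃ (z := z) ?_ ?_
  · linear_combination h_root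
  · linear_combination h_deriv

lemma ne_of_sum_eq_zero_of_pairs_eq_zero [NeZero (3 : R)] {e₁ e₂ e₃ : R}
    (h_sum : e₁ + e₂ + e₃ = 0) (h_pairs : e₁ * e₂ + e₁ * e₃ + e₂ * e₃ = 0) (h₁ : e₁ ≠ 0) :
    e₁ ≠ e₂ := by
  rintro rfl
  have h_sq : 3 * e₁ ^ 2 = 0 := by linear_combination 2 * e₁ * h_sum - h_pairs
  exact mul_ne_zero (NeZero.ne 3) (pow_ne_zero 2 h₁) h_sq

lemma cubicPolar_eq_zero_of_hessianFactor_eq_zero [NeZero (3 : R)] {e₁ e₂ e₃ : R}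
    (h_sum : e₁ + e₂ + e₃ = 0) (h_pairs : e₁ * e₂ + e₁ * e₃ + e₂ * e₃ = 0)
    (h_prod : e₁ * e₂ * e₃ ≠ 0) (h₁₂ : α₁ ≠ α₂) (h₁₃ : α₁ ≠ α₃) (h₂₃ : α₂ ≠ α₃) {u v : R}
    (hu : hessianFactor e₁ e₂ e₃ α₁ α₂ α₃ u = 0) (hv : hessianFactor e₂ e₁ e₃ α₁ α₂ α₃ v = 0) :
    cubicPolar (-(α₁ + α₂ + α₃)) (α₁ * α₂ + α₁ * α₃ + α₂ * α₃) (-(α₁ * α₂ * α₃)) u v = 0 := by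
  have h_polar := hessianFactor_sq_mul_sub_eq_mul_cubicPolar h_sum h_pairs α₁ α₂ α₃ u v
  rw [hu, hv, zero_pow two_ne_zero, zero_mul, mul_zero, sub_zero] at h_polar
  have he : e₁ ≠ e₂ := ne_of_sum_eq_zero_of_pairs_eq_zero h_sum h_pairs
    (left_ne_zero_of_mul (left_ne_zero_of_mul h_prod))
  have h_vandermonde : (α₁ - α₂) * (α₁ - α₃) * (α₂ - α₃) ≠ 0 :=
    mul_ne_zero (mul_ne_zero (sub_ne_zero.2 h₁₂) (sub_ne_zero.2 h₁₃)) (sub_ne_zero.2 h₂₃)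
  have h_scale : (e₁ - e₂) * e₃ ^ 2 ≠ 0 :=
    mul_ne_zero (sub_ne_zero.2 he) (pow_ne_zero 2 (right_ne_zero_of_mul h_prod))
  exact (mul_eq_zero.1 h_polar.symm).resolve_left (mul_ne_zero h_scale h_vandermonde)

end IsDomain

section Field

variable {K : Type*} [Field K]

lemma encard_setOf_quadratic_eq_zero [NeZero (2 : K)] {a b c : K} (ha : a ≠ 0)
    (h_square : IsSquare (discrim a b c)) (h_discrim : discrim a b c ≠ 0) :
    {x : K | a * (x * x) + b * x + c = 0}.encard = 2 := by
  obtain ⟨s, hs⟩ := h_square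
  have hs₀ : s ≠ 0 := left_ne_zero_of_mul (hs ▸ h_discrim)
  have h_roots : {x : K | a * (x * x) + b * x + c = 0} =
      {(-b + s) / (2 * a), (-b - s) / (2 * a)} :=
    Set.ext (quadratic_eq_zero_iff ha hs)
  rw [h_roots, Set.encard_pair]
  intro h
  rw [div_left_inj' (mul_ne_zero two_ne_zero ha)] at h
  have h_two_mul : 2 * s = 0 := by linear_combination h
  exact mul_ne_zero two_ne_zero hs₀ h_two_mul

lemma encard_setOf_cubicPolar_eq_zero [IsSepClosed K] [NeZero (2 : K)] {a b c w : K}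
    (h_lead : a + 3 * w ≠ 0)
    (h_hessian : (a ^ 2 - 3 * b) * w ^ 2 + (a * b - 9 * c) * w + (b ^ 2 - 3 * a * c) ≠ 0) :
    {z : K | cubicPolar a b c z w = 0}.encard = 2 := by
  simp only [cubicPolar_eq_quadratic]
  refine encard_setOf_quadratic_eq_zero h_lead (IsSepClosed.exists_eq_mul_self _) ?_
  rw [discrim_cubicPolar]
  exact mul_ne_zero (mul_ne_zero two_ne_zero two_ne_zero) h_hessian

lemma neg_div_eq_iff_cubicPolar_eq_zero {a b c z w : K} (hz : 3 * z ^ 2 + 2 * a * z + b ≠ 0) :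
    -((a * z ^ 2 + 2 * b * z + 3 * c) / (3 * z ^ 2 + 2 * a * z + b)) = w ↔
      cubicPolar a b c z w = 0 := by
  rw [← neg_div, div_eq_iff hz, neg_eq_iff_add_eq_zero, cubicPolar]

lemma hessianFactor_neg_div_eq_zero {e₁ e₂ e₃ α₁ α₂ α₃ : K}
    (h : α₁ * e₁ + α₂ * e₂ + α₃ * e₃ ≠ 0) :
    hessianFactor e₁ e₂ e₃ α₁ α₂ α₃ (-((α₁ * α₂ * e₃ + α₁ * α₃ * e₂ + α₂ * α₃ * e₁) /
      (α₁ * e₁ + α₂ * e₂ + α₃ * e₃))) = 0 := by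
  rw [hessianFactor, mul_neg, mul_div_cancel₀ _ h, neg_add_cancel]

/-- The hypotheses on `e₁, e₂, e₃` are Vieta's relations for
`X³ + 1 = (X - e₁) (X - e₂) (X - e₃)`. -/
theorem stmt_13_general [IsSepClosed K] [NeZero (2 : K)] [NeZero (3 : K)]
    (α₁ α₂ α₃ e₁ e₂ e₃ a b c u v : K) (Q : K → K)
    (he_sum : e₁ + e₂ + e₃ = 0) (he_pairs : e₁ * e₂ + e₁ * e₃ + e₂ * e₃ = 0)
    (he_prod : e₁ * e₂ * e₃ = -1)
    (h12 : α₁ ≠ α₂) (h13 : α₁ ≠ α₃) (h23 : α₂ ≠ α₃)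
    (ha : a = -(α₁ + α₂ + α₃))
    (hb : b = α₁ * α₂ + α₁ * α₃ + α₂ * α₃)
    (hc : c = -(α₁ * α₂ * α₃))
    (hQ : ∀ z, Q z = -((a * z ^ 2 + 2 * b * z + 3 * c) / (3 * z ^ 2 + 2 * a * z + b)))
    (hu : u = -((α₁ * α₂ * e₃ + α₁ * α₃ * e₂ + α₂ * α₃ * e₁) /
      (α₁ * e₁ + α₂ * e₂ + α₃ * e₃)))
    (hv : v = -((α₁ * α₂ * e₃ + α₁ * α₃ * e₁ + α₂ * α₃ * e₂) /
      (α₁ * e₂ + α₂ * e₁ + α₃ * e₃)))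
    (w : K) (hw₁ : a + 3 * w ≠ 0)
    (hw₂ : (a ^ 2 - 3 * b) * w ^ 2 + (a * b - 9 * c) * w + (b ^ 2 - 3 * a * c) ≠ 0) :
    {z : K | 3 * z ^ 2 + 2 * a * z + b ≠ 0 ∧ Q z = w}.encard = 2 ∧
    (α₁ * e₁ + α₂ * e₂ + α₃ * e₃ ≠ 0 → α₁ * e₂ + α₂ * e₁ + α₃ * e₃ ≠ 0 →
      Q u = v ∧ Q v = u) := by
  have h_fiber (z t : K) :
      3 * z ^ 2 + 2 * a * z + b ≠ 0 ∧ Q z = t ↔ cubicPolar a b c z t = 0 := by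
    rw [hQ, and_congr_right neg_div_eq_iff_cubicPolar_eq_zero, and_iff_right_iff_imp]
    subst ha hb hc
    exact cubic_derivative_ne_zero_of_cubicPolar_eq_zero h12 h13 h23
  refine ⟨?_, fun hD₁ hD₂ => ?_⟩
  · simp only [h_fiber]
    exact encard_setOf_cubicPolar_eq_zero hw₁ hw₂
  · have hu₀ : hessianFactor e₁ e₂ e₃ α₁ α₂ α₃ u = 0 := hu ▸ hessianFactor_neg_div_eq_zero hD₁
    have hv₀ : hessianFactor e₂ e₁ e₃ α₁ α₂ α₃ v = 0 := hv ▸ hessianFactor_neg_div_eq_zero hD₂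
    have he₀ : e₁ * e₂ * e₃ ≠ 0 := he_prod ▸ neg_ne_zero.2 one_ne_zero
    have huv : cubicPolar a b c u v = 0 := by
      rw [ha, hb, hc]
      exact cubicPolar_eq_zero_of_hessianFactor_eq_zero he_sum he_pairs he₀ h12 h13 h23 hu₀ hv₀
    have hvu : cubicPolar a b c v u = 0 := by
      rw [ha, hb, hc]
      exact cubicPolar_eq_zero_of_hessianFactor_eq_zero (by linear_combination he_sum)
        (by linear_combination he_pairs) (mul_comm e₁ e₂ ▸ he₀) h12 h13 h23 hv₀ hu₀
    exact ⟨((h_fiber u v).2 huv).2, ((h_fiber v u).2 hvu).2⟩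

end Field

lemma exp_neg_pi_div_three_mul_I_add_exp :
    Complex.exp (-(Real.pi : ℂ) / 3 * Complex.I) + Complex.exp ((Real.pi : ℂ) / 3 * Complex.I) =
      1 := by
  have h_cos : Complex.cos ((Real.pi : ℂ) / 3) = 1 / 2 := by
    have h := congrArg Complex.ofReal Real.cos_pi_div_three
    push_cast at h
    exact h
  rw [neg_div, add_comm, ← Complex.two_cos, h_cos, mul_one_div_cancel two_ne_zero]

lemma exp_neg_pi_div_three_mul_I_mul_exp :
    Complex.exp (-(Real.pi : ℂ) / 3 * Complex.I) * Complex.exp ((Real.pi : ℂ) / 3 * Complex.I) =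
      1 := by
  rw [neg_div, neg_mul, ← Complex.exp_add, neg_add_cancel, Complex.exp_zero]

theorem stmt_13 (α₁ α₂ α₃ e₁ e₂ e₃ a b c u v : ℂ) (Q : ℂ → ℂ)
    (he₁ : e₁ = Complex.exp (-(Real.pi : ℂ) / 3 * Complex.I))
    (he₂ : e₂ = Complex.exp ((Real.pi : ℂ) / 3 * Complex.I))
    (he₃ : e₃ = -1)
    (h12 : α₁ ≠ α₂) (h13 : α₁ ≠ α₃) (h23 : α₂ ≠ α₃)
    (ha : a = -(α₁ + α₂ + α₃))
    (hb : b = α₁ * α₂ + α₁ * α₃ + α₂ * α₃)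
    (hc : c = -(α₁ * α₂ * α₃))
    (hQ : ∀ z, Q z = -((a * z ^ 2 + 2 * b * z + 3 * c) / (3 * z ^ 2 + 2 * a * z + b)))
    (hu : u = -((α₁ * α₂ * e₃ + α₁ * α₃ * e₂ + α₂ * α₃ * e₁) /
      (α₁ * e₁ + α₂ * e₂ + α₃ * e₃)))
    (hv : v = -((α₁ * α₂ * e₃ + α₁ * α₃ * e₁ + α₂ * α₃ * e₂) /
      (α₁ * e₂ + α₂ * e₁ + α₃ * e₃)))
    (w : ℂ) (hw₁ : a + 3 * w ≠ 0)
    (hw₂ : (a ^ 2 - 3 * b) * w ^ 2 + (a * b - 9 * c) * w + (b ^ 2 - 3 * a * c) ≠ 0) :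
    {z : ℂ | 3 * z ^ 2 + 2 * a * z + b ≠ 0 ∧ Q z = w}.encard = 2 ∧
    (α₁ * e₁ + α₂ * e₂ + α₃ * e₃ ≠ 0 → α₁ * e₂ + α₂ * e₁ + α₃ * e₃ ≠ 0 →
      Q u = v ∧ Q v = u) := by
  have h_add : e₁ + e₂ = 1 := by rw [he₁, he₂, exp_neg_pi_div_three_mul_I_add_exp]
  have h_mul : e₁ * e₂ = 1 := by rw [he₁, he₂, exp_neg_pi_div_three_mul_I_mul_exp]
  exact stmt_13_general α₁ α₂ α₃ e₁ e₂ e₃ a b c u v Q (by rw [h_add, he₃]; ring)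
    (by linear_combination h_mul - h_add + (e₁ + e₂) * he₃) (by rw [h_mul, he₃, one_mul])
    h12 h13 h23 ha hb hc hQ hu hv w hw₁ hw₂
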